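/- arXiv:1910.12307 — 3 statements merged into one kernel-verified Lean document; each statement's English description precedes it below -/
import Mathlib

section
/- Let A ∈ M_{2n}(ℂ) be normal (AᴴA = AAᴴ) and Hamiltonian (JᵀAᴴJ = −A, J = J_{2n}). If A is diagonalizable by a symplectic similarity transformation, then A is diagonalizable by a matrix that is simultaneously unitary and symplectic. -/
open Matrix

/-- The matrix `J_{2n} = [[0, I], [-I, 0]]`. -/
def Jmat (n : ℕ) : Matrix (Fin n ⊕ Fin n) (Fin n ⊕ Fin n) ℂ :=
  Matrix.fromBlocks 0 1 (-1) 0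

/-!
Replace the symplectic matrix `S` by the unitary factor `U = S |S|⁻¹` of its polar decomposition.
Since `SᴴS` is again symplectic, `Jᴴ (SᴴS) J = (SᴴS)⁻¹`, and taking positive square roots gives
`Jᴴ |S| J = |S|⁻¹`; so `|S|`, and with it `U`, is symplectic. If `S D = A S` with `A` and `D`
normal, then `SᴴS` commutes with `D` by the Fuglede–Putnam theorem, hence so does `|S|`, and
`U D = A U`.
-/

open scoped Ring

section FormIsometries

variable {R : Type*} [Monoid R] [StarMul R]

/-- The elements preserving the sesquilinear form `(x, y) ↦ star x * j * y`. For `j = Jmat n` these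
are the symplectic matrices (with the conjugate transpose, unlike `Matrix.symplecticGroup`). -/
def formIsometries (j : R) : Submonoid R where
  carrier := {s | star s * j * s = j}
  one_mem' := by simp
  mul_mem' {s t} (hs : star s * j * s = j) (ht : star t * j * t = j) := by
    calc star (s * t) * j * (s * t) = star t * (star s * j * s) * t := by
          simp only [star_mul, mul_assoc]
      _ = j := by rw [hs, ht]

lemma mem_formIsometries_iff {j s : R} : s ∈ formIsometries j ↔ star s * j * s = j :=
  Iff.rfl

lemma star_mul_mul_mul_eq_one_of_mem_formIsometries {j s : R}
    (hj : j ∈ unitary R) (hs : s ∈ formIsometries j) : star j * star s * j * s = 1 := by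
  rw [mul_assoc (star j), mul_assoc (star j), mem_formIsometries_iff.mp hs,
    Unitary.star_mul_self_of_mem hj]

lemma isUnit_of_mem_formIsometries [IsDedekindFiniteMonoid R] {j s : R} (hj : j ∈ unitary R)
    (hs : s ∈ formIsometries j) : IsUnit s :=
  .of_mul_eq_one_right _ (star_mul_mul_mul_eq_one_of_mem_formIsometries hj hs)

lemma star_mem_formIsometries {j s : R} (hj : j ∈ unitary R) (hu : IsUnit s)
    (hs : s ∈ formIsometries j) : star s ∈ formIsometries j := by
  have hinv : s * (star j * star s * j) = 1 :=
    hu.mul_right_cancel <| by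
      rw [mul_assoc s, star_mul_mul_mul_eq_one_of_mem_formIsometries hj hs, mul_one, one_mul]
  have hstar : s * star j * star s = star j := by
    calc s * star j * star s = s * (star j * star s * j) * star j := by
          simp only [mul_assoc, Unitary.mul_star_self_of_mem hj, mul_one]
      _ = star j := by rw [hinv, one_mul]
  simpa [mem_formIsometries_iff, mul_assoc] using congrArg star hstar

end FormIsometries

section RingInverse

variable {R : Type*} [MonoidWithZero R] [StarMul R]

lemma ringInverse_mem_formIsometries {j s : R} (hu : IsUnit s) (hs : s ∈ formIsometries j) :
    s⁻¹ʳ ∈ formIsometries j := by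
  rw [mem_formIsometries_iff]
  calc star s⁻¹ʳ * j * s⁻¹ʳ = star s⁻¹ʳ * (star s * j * s) * s⁻¹ʳ := by
        rw [mem_formIsometries_iff.mp hs]
    _ = star (s * s⁻¹ʳ) * j * (s * s⁻¹ʳ) := by simp only [star_mul, mul_assoc]
    _ = j := by simp [Ring.mul_inverse_cancel s hu]

lemma mem_formIsometries_iff_star_mul_mul_eq_ringInverse {j p : R} (hj : j ∈ unitary R)
    (hu : IsUnit p) (hp : IsSelfAdjoint p) :
    p ∈ formIsometries j ↔ star j * p * j = p⁻¹ʳ := by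
  rw [mem_formIsometries_iff, hp.star_eq, ← one_mul p⁻¹ʳ,
    Ring.eq_mul_inverse_iff_mul_eq _ _ _ hu]
  refine ⟨fun h ↦ ?_, fun h ↦ ?_⟩
  · rw [mul_assoc (star j), mul_assoc (star j), h, Unitary.star_mul_self_of_mem hj]
  · calc p * j * p = j * star j * (p * j * p) := by
          rw [Unitary.mul_star_self_of_mem hj, one_mul]
      _ = j * (star j * p * j * p) := by simp only [mul_assoc]
      _ = j := by rw [h, mul_one]

end RingInverse

section UnitaryFactor

variable {A : Type*} [CStarAlgebra A] [PartialOrder A] [StarOrderedRing A]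

lemma sqrt_star_mul_mul {j p : A} (hj : j ∈ unitary A) (hp : 0 ≤ p) :
    CFC.sqrt (star j * p * j) = star j * CFC.sqrt p * j := by
  refine CFC.sqrt_unique ?_ (star_left_conjugate_nonneg (CFC.sqrt_nonneg p) j)
  calc star j * CFC.sqrt p * j * (star j * CFC.sqrt p * j)
      = star j * (CFC.sqrt p * (j * star j) * CFC.sqrt p) * j := by simp only [mul_assoc]
    _ = star j * p * j := by
      rw [Unitary.mul_star_self_of_mem hj, mul_one, CFC.sqrt_mul_sqrt_self p]

lemma sqrt_mem_formIsometries {j p : A} (hj : j ∈ unitary A) (hu : IsUnit p) (hp : 0 ≤ p)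
    (hpj : p ∈ formIsometries j) : CFC.sqrt p ∈ formIsometries j := by
  rw [mem_formIsometries_iff_star_mul_mul_eq_ringInverse hj ((CFC.isUnit_sqrt_iff p).mpr hu)
      (CFC.sqrt_nonneg p).isSelfAdjoint, ← sqrt_star_mul_mul hj hp, ← CFC.sqrt_ringInverse,
    (mem_formIsometries_iff_star_mul_mul_eq_ringInverse hj hu hp.isSelfAdjoint).mp hpj]

lemma isUnit_cfcAbs {s : A} (hu : IsUnit s) : IsUnit (CFC.abs s) :=
  (CFC.isUnit_sqrt_iff _ (star_mul_self_nonneg s)).mpr (hu.star.mul hu)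

lemma cfcAbs_mem_formIsometries {j s : A} (hj : j ∈ unitary A) (hu : IsUnit s)
    (hs : s ∈ formIsometries j) : CFC.abs s ∈ formIsometries j :=
  sqrt_mem_formIsometries hj (hu.star.mul hu) (star_mul_self_nonneg s)
    (mul_mem (star_mem_formIsometries hj hu hs) hs)

lemma commute_cfcAbs_of_semiconjBy {a d s : A} (ha : IsStarNormal a) (hd : IsStarNormal d)
    (h : SemiconjBy s d a) : Commute (CFC.abs s) d := by
  have hstar : SemiconjBy (star s) a d := by
    simpa [SemiconjBy] using (congrArg star (h.star_right hd ha).eq).symm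
  exact Commute.cfcₙ_nnreal (hstar.mul_left h) _

/-- The unitary factor of the polar decomposition `s = u * |s|` of an invertible `s`. -/
noncomputable def unitaryFactor (s : A) : A := s * (CFC.abs s)⁻¹ʳ

lemma unitaryFactor_mem_unitary {s : A} (hu : IsUnit s) : unitaryFactor s ∈ unitary A := by
  have hfactor : unitaryFactor s = hu.unit * ((isUnit_cfcAbs hu).unit⁻¹ : Aˣ) := by
    rw [unitaryFactor, Ring.inverse_of_isUnit (isUnit_cfcAbs hu), IsUnit.unit_spec]
  rw [hfactor, Units.mul_inv_mem_unitary]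
  ext
  simp [(CFC.abs_nonneg s).isSelfAdjoint.star_eq, CFC.abs_mul_abs]

lemma unitaryFactor_mem_formIsometries {j s : A} (hj : j ∈ unitary A) (hu : IsUnit s)
    (hs : s ∈ formIsometries j) : unitaryFactor s ∈ formIsometries j :=
  mul_mem hs <| ringInverse_mem_formIsometries (isUnit_cfcAbs hu) <|
    cfcAbs_mem_formIsometries hj hu hs

lemma semiconjBy_unitaryFactor {a d s : A} (hu : IsUnit s) (ha : IsStarNormal a)
    (hd : IsStarNormal d) (h : SemiconjBy s d a) : SemiconjBy (unitaryFactor s) d a := by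
  refine h.mul_left ?_
  rw [Ring.inverse_of_isUnit (isUnit_cfcAbs hu)]
  exact Commute.units_inv_left (commute_cfcAbs_of_semiconjBy ha hd h)

end UnitaryFactor

lemma isStarNormal_of_isDiag {m R : Type*} [Fintype m] [CommSemiring R] [StarRing R]
    {D : Matrix m m R} (hD : D.IsDiag) : IsStarNormal D := by
  classical
  refine ⟨?_⟩
  rw [← hD.diagonal_diag, star_eq_conjTranspose, diagonal_conjTranspose]
  exact commute_diagonal _ _

lemma Jmat_mem_unitaryGroup (n : ℕ) : Jmat n ∈ unitaryGroup (Fin n ⊕ Fin n) ℂ := by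
  simp [mem_unitaryGroup_iff, star_eq_conjTranspose, Jmat, fromBlocks_conjTranspose,
    fromBlocks_multiply]

open scoped MatrixOrder Matrix.Norms.L2Operator in
theorem stmt15_general {m : Type*} [Fintype m] [DecidableEq m] {J A S : Matrix m m ℂ}
    (hJ : J ∈ unitaryGroup m ℂ) (hA : IsStarNormal A) (hS : Sᴴ * J * S = J)
    (hD : IsStarNormal (S⁻¹ * A * S)) :
    ∃ U : Matrix m m ℂ, Uᴴ * U = 1 ∧ Uᴴ * J * U = J ∧ U⁻¹ * A * U = S⁻¹ * A * S := by
  have hSu : IsUnit S := isUnit_of_mem_formIsometries hJ hS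
  have hSD : SemiconjBy S (S⁻¹ * A * S) A := by
    rw [SemiconjBy, mul_assoc, mul_nonsing_inv_cancel_left _ _ ((isUnit_iff_isUnit_det S).mp hSu)]
  have hU : unitaryFactor S ∈ unitaryGroup m ℂ := unitaryFactor_mem_unitary hSu
  have hUdet : IsUnit (unitaryFactor S).det := UnitaryGroup.det_isUnit ⟨_, hU⟩
  refine ⟨unitaryFactor S, mem_unitaryGroup_iff'.mp hU,
    unitaryFactor_mem_formIsometries hJ hSu hS, ?_⟩
  rw [mul_assoc, ← (semiconjBy_unitaryFactor hSu hA hD hSD).eq,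
    nonsing_inv_mul_cancel_left _ _ hUdet]

theorem stmt15 (n : ℕ) (A : Matrix (Fin n ⊕ Fin n) (Fin n ⊕ Fin n) ℂ)
    (hnorm : Aᴴ * A = A * Aᴴ)
    (hHam : (Jmat n)ᵀ * Aᴴ * Jmat n = -A)
    (hdiag : ∃ S : Matrix (Fin n ⊕ Fin n) (Fin n ⊕ Fin n) ℂ,
      Sᴴ * Jmat n * S = Jmat n ∧ (S⁻¹ * A * S).IsDiag) :
    ∃ U : Matrix (Fin n ⊕ Fin n) (Fin n ⊕ Fin n) ℂ,
      Uᴴ * U = 1 ∧ Uᴴ * Jmat n * U = Jmat n ∧ (U⁻¹ * A * U).IsDiag := by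
  obtain ⟨S, hS, hD⟩ := hdiag
  obtain ⟨U, hU, hUJ, hUA⟩ :=
    stmt15_general (Jmat_mem_unitaryGroup n) ⟨hnorm⟩ hS (isStarNormal_of_isDiag hD)
  exact ⟨U, hU, hUJ, hUA ▸ hD⟩
end

section
/- A matrix A ∈ M_{2n}(ℂ) is normal, skew-Hamiltonian, and symplectically diagonalizable if and only if A = N + N⋆ for some normal matrix N with NN⋆ = N⋆N = 0, where N⋆ = JᵀNᴴJ, J = J_{2n}. -/
open Matrix

/-! Call an isometry `U` with `UᴴJU = 0` a Lagrangian frame. Both conditions on `A` say that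
`A = UCUᴴ + (UCUᴴ)⋆` for a Lagrangian frame `U` and a normal matrix `C`.

If a symplectic `S` diagonalizes `A`, its first `n` columns span an `A`-invariant Lagrangian
subspace. This subspace reduces `A` because `A` is normal, and `A⋆ = A` forces the action of `A` on
its orthogonal complement to be the adjoint of the one on the subspace itself.

If `N` is normal and `NN⋆ = 0`, the range of `N` is isotropic. It lies in a Lagrangian subspace:
Lagrangians are the graphs of unitary maps between the eigenspaces of `J` for `i` and `-i`,
isotropic subspaces are the graphs of partial isometries, and partial isometries between spaces of
equal finite dimension extend to unitary maps. Compressing `N` to the Lagrangian gives `C`.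

Conversely, a unitary diagonalization of `C` makes `S = [U, JU]` a unitary symplectic matrix that
diagonalizes `A`. -/

section NormalMatrix

variable {m k R : Type*} [Fintype m] [CommRing R] [StarRing R]

lemma isStarNormal_mul_mul_conjTranspose [Fintype k] [DecidableEq k] {U : Matrix m k R}
    (hU : Uᴴ * U = 1) {C : Matrix k k R} (hC : IsStarNormal C) : IsStarNormal (U * C * Uᴴ) := by
  have mul_conj (X Y : Matrix k k R) : U * X * Uᴴ * (U * Y * Uᴴ) = U * (X * Y) * Uᴴ := by
    simp only [Matrix.mul_assoc, ← Matrix.mul_assoc Uᴴ U, hU, Matrix.one_mul]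
  have conj_conjTranspose : (U * C * Uᴴ)ᴴ = U * Cᴴ * Uᴴ := by
    simp only [conjTranspose_mul, conjTranspose_conjTranspose, Matrix.mul_assoc]
  rw [isStarNormal_iff, commute_iff_eq, star_eq_conjTranspose] at hC ⊢
  rw [conj_conjTranspose, mul_conj, mul_conj, hC]

variable [PartialOrder R] [StarOrderedRing R] [NoZeroDivisors R] {A : Matrix m m R}

lemma conjTranspose_mul_eq_zero_of_mul_eq_zero (hA : IsStarNormal A) {Z : Matrix m k R}
    (h : A * Z = 0) : Aᴴ * Z = 0 := by
  have hAA : Aᴴ * A = A * Aᴴ := hA.star_comm_self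
  rw [← conjTranspose_mul_self_eq_zero]
  calc (Aᴴ * Z)ᴴ * (Aᴴ * Z) = Zᴴ * (A * Aᴴ) * Z := by
        simp only [conjTranspose_mul, conjTranspose_conjTranspose, Matrix.mul_assoc]
    _ = Zᴴ * Aᴴ * (A * Z) := by simp only [← hAA, Matrix.mul_assoc]
    _ = 0 := by rw [h, Matrix.mul_zero]

variable [Fintype k] [DecidableEq k] {U : Matrix m k R} {C : Matrix k k R}

-- `C = Uᴴ A U`, so `XᴴX = CᴴC - CCᴴ` for `X = Aᴴ U - U Cᴴ`, which has trace zero.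
lemma conjTranspose_mul_eq_of_mul_eq (hA : IsStarNormal A) (hU : Uᴴ * U = 1)
    (h : A * U = U * C) : Aᴴ * U = U * Cᴴ := by
  have hAA : A * Aᴴ = Aᴴ * A := hA.star_comm_self.symm
  have hC : Uᴴ * (A * U) = C := by rw [h, ← Matrix.mul_assoc, hU, Matrix.one_mul]
  have hC' : Uᴴ * (Aᴴ * U) = Cᴴ := by simp [← hC, Matrix.mul_assoc]
  have hCC : Uᴴ * (A * (Aᴴ * U)) = Cᴴ * C := by
    rw [← Matrix.mul_assoc A, hAA, Matrix.mul_assoc, h, ← Matrix.mul_assoc Aᴴ,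
      ← Matrix.mul_assoc Uᴴ, hC']
  rw [← sub_eq_zero, ← trace_conjTranspose_mul_self_eq_zero_iff]
  have expand : (Aᴴ * U - U * Cᴴ)ᴴ * (Aᴴ * U - U * Cᴴ) = Cᴴ * C - C * Cᴴ := by
    simp only [conjTranspose_sub, conjTranspose_mul, conjTranspose_conjTranspose, Matrix.sub_mul,
      Matrix.mul_sub, Matrix.mul_assoc, hCC, hC', ← Matrix.mul_assoc Uᴴ U, hU, Matrix.one_mul]
    rw [← Matrix.mul_assoc A, ← Matrix.mul_assoc Uᴴ, hC]
    abel
  rw [expand, trace_sub, trace_mul_comm, sub_self]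

lemma isStarNormal_of_mul_eq (hA : IsStarNormal A) (hU : Uᴴ * U = 1) (h : A * U = U * C) :
    IsStarNormal C := by
  have hAA : Aᴴ * A = A * Aᴴ := hA.star_comm_self
  have h' := conjTranspose_mul_eq_of_mul_eq hA hU h
  have gram (X : Matrix k k R) : Xᴴ * X = (U * X)ᴴ * (U * X) := by
    rw [conjTranspose_mul, Matrix.mul_assoc, ← Matrix.mul_assoc Uᴴ, hU, Matrix.one_mul]
  rw [isStarNormal_iff, commute_iff_eq, star_eq_conjTranspose]
  calc Cᴴ * C = Uᴴ * (Aᴴ * A) * U := by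
        rw [gram, ← h, conjTranspose_mul]; simp only [Matrix.mul_assoc]
    _ = (Aᴴ * U)ᴴ * (Aᴴ * U) := by
        rw [hAA, conjTranspose_mul, conjTranspose_conjTranspose]; simp only [Matrix.mul_assoc]
    _ = C * Cᴴ := by rw [h', ← gram, conjTranspose_conjTranspose]

end NormalMatrix

section SpectralTheorem

open scoped ComplexStarModule
open Module.End (eigenspace mem_eigenspace_iff)

lemma exists_orthonormalBasis_forall_mem {𝕜 E ι : Type*} [RCLike 𝕜] [NormedAddCommGroup E]
    [InnerProductSpace 𝕜 E] [FiniteDimensional 𝕜 E] [DecidableEq ι] {V : ι → Submodule 𝕜 E}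
    (hV : DirectSum.IsInternal V)
    (hV' : OrthogonalFamily 𝕜 (fun i ↦ V i) fun i ↦ (V i).subtypeₗᵢ) :
    ∃ b : OrthonormalBasis (Fin (Module.finrank 𝕜 E)) 𝕜 E, ∀ a, ∃ i, b a ∈ V i := by
  have : Fintype {i // V i ≠ ⊥} :=
    (WellFoundedGT.finite_ne_bot_of_iSupIndep hV.submodule_iSupIndep).fintype
  have hVInternal := DirectSum.isInternal_ne_bot_iff.mpr hV
  have hVOrthogonal := hV'.comp (Subtype.val_injective (p := fun i ↦ V i ≠ ⊥))
  exact ⟨hVInternal.subordinateOrthonormalBasis rfl hVOrthogonal, fun a ↦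
    ⟨_, hVInternal.subordinateOrthonormalBasis_subordinate rfl a hVOrthogonal⟩⟩

lemma exists_orthonormalBasis_apply_eq_smul_of_isStarNormal {E : Type*} [NormedAddCommGroup E]
    [InnerProductSpace ℂ E] [FiniteDimensional ℂ E] {T : E →ₗ[ℂ] E} (hT : IsStarNormal T) :
    ∃ (b : OrthonormalBasis (Fin (Module.finrank ℂ E)) ℂ E)
      (d : Fin (Module.finrank ℂ E) → ℂ), ∀ i, T (b i) = d i • b i := by
  have hre : (ℜ T : E →ₗ[ℂ] E).IsSymmetric :=
    (LinearMap.isSymmetric_iff_isSelfAdjoint _).mpr (ℜ T).2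
  have him : (ℑ T : E →ₗ[ℂ] E).IsSymmetric :=
    (LinearMap.isSymmetric_iff_isSelfAdjoint _).mpr (ℑ T).2
  obtain ⟨b, hb⟩ := exists_orthonormalBasis_forall_mem
    (hre.directSum_isInternal_of_commute him (Commute.realPart_imaginaryPart T))
    (hre.orthogonalFamily_eigenspace_inf_eigenspace him)
  choose c hc using hb
  refine ⟨b, fun i ↦ (c i).2 + Complex.I * (c i).1, fun i ↦ ?_⟩
  nth_rw 1 [← realPart_add_I_smul_imaginaryPart T]
  rw [LinearMap.add_apply, LinearMap.smul_apply, mem_eigenspace_iff.mp (hc i).1,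
    mem_eigenspace_iff.mp (hc i).2, smul_smul, add_smul]

lemma exists_unitary_diagonalization_of_isStarNormal {k : Type*} [Fintype k] [DecidableEq k]
    {C : Matrix k k ℂ} (hC : IsStarNormal C) :
    ∃ W ∈ unitaryGroup k ℂ, ∃ d : k → ℂ, C = W * diagonal d * Wᴴ := by
  let e := EuclideanSpace.basisFun k ℂ
  let Φ := LinearMap.toMatrixOrthonormal e
  obtain ⟨b, d, hb⟩ := exists_orthonormalBasis_apply_eq_smul_of_isStarNormal (hC.map Φ.symm)
  let σ : Fin (Module.finrank ℂ (EuclideanSpace ℂ k)) ≃ k :=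
    Fintype.equivOfCardEq (by simp)
  let b' := b.reindex σ
  have hW := e.toMatrix_orthonormalBasis_mem_unitary b'
  have hCW : C * e.toBasis.toMatrix b' = e.toBasis.toMatrix b' * diagonal (d ∘ σ.symm) := by
    refine ext_of_mulVec_single fun j ↦ ?_
    have hWj (c : ℂ) : e.toBasis.toMatrix b' *ᵥ Pi.single j c = c • (b (σ.symm j)).ofLp := by
      ext i; simp [e, b', Module.Basis.toMatrix_apply, mul_comm]
    have hCj : C *ᵥ (b (σ.symm j)).ofLp = d (σ.symm j) • (b (σ.symm j)).ofLp :=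
      congrArg WithLp.ofLp (hb (σ.symm j))
    rw [← mulVec_mulVec, ← mulVec_mulVec, diagonal_mulVec_single, hWj, hWj, one_smul, hCj, mul_one,
      Function.comp_apply]
  refine ⟨e.toBasis.toMatrix b', hW, d ∘ σ.symm, ?_⟩
  rw [← hCW, Matrix.mul_assoc, ← star_eq_conjTranspose, mem_unitaryGroup_iff.mp hW, Matrix.mul_one]

end SpectralTheorem

section Isometry

variable {𝕜 : Type*} [RCLike 𝕜]

lemma exists_linearIsometryEquiv_apply_eq {E F : Type*} [AddCommGroup E] [Module 𝕜 E]
    [NormedAddCommGroup F] [InnerProductSpace 𝕜 F] [FiniteDimensional 𝕜 F] {f g : E →ₗ[𝕜] F}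
    (h : ∀ x, ‖f x‖ = ‖g x‖) : ∃ T : F ≃ₗᵢ[𝕜] F, ∀ x, T (f x) = g x := by
  have hker : f.ker ≤ g.ker := fun x hx ↦ by
    rwa [LinearMap.mem_ker, ← norm_eq_zero, ← h, norm_eq_zero]
  let L₀ : f.range →ₗ[𝕜] F := f.ker.liftQ g hker ∘ₗ f.quotKerEquivRange.symm
  have hL₀ (x) : L₀ ⟨f x, f.mem_range_self x⟩ = g x := by
    rw [LinearMap.comp_apply, LinearEquiv.coe_coe, LinearMap.quotKerEquivRange_symm_apply_image,
      Submodule.mkQ_apply, Submodule.liftQ_apply]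
  let L : f.range →ₗᵢ[𝕜] F := ⟨L₀, by rintro ⟨_, x, rfl⟩; rw [hL₀, ← h]; rfl⟩
  exact ⟨L.extend.toLinearIsometryEquiv rfl, fun x ↦
    (L.extend_apply ⟨f x, f.mem_range_self x⟩).trans (hL₀ x)⟩

variable {m k : Type*} [Fintype m] [Fintype k] [DecidableEq k]

open scoped MatrixOrder ComplexOrder Matrix.Norms.L2Operator in
lemma exists_isUnit_conjTranspose_mul_self_eq_one {V : Matrix m k 𝕜}
    (hV : Function.Injective V.mulVec) :
    ∃ G : Matrix k k 𝕜, IsUnit G ∧ (V * G)ᴴ * (V * G) = 1 := by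
  obtain ⟨B, hB, hVB⟩ := CStarAlgebra.isStrictlyPositive_iff_eq_star_mul_self.mp
    (PosDef.conjTranspose_mul_self V hV).isStrictlyPositive
  rw [star_eq_conjTranspose] at hVB
  have hBdet : IsUnit B.det := (isUnit_iff_isUnit_det B).mp hB
  refine ⟨B⁻¹, B.isUnit_nonsing_inv_iff.mpr hB, ?_⟩
  calc (V * B⁻¹)ᴴ * (V * B⁻¹) = (B⁻¹)ᴴ * (Vᴴ * V) * B⁻¹ := by
        simp only [conjTranspose_mul, Matrix.mul_assoc]
    _ = (B * B⁻¹)ᴴ * (B * B⁻¹) := by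
        rw [hVB]; simp only [conjTranspose_mul, Matrix.mul_assoc]
    _ = 1 := by rw [B.mul_nonsing_inv hBdet, conjTranspose_one, Matrix.one_mul]

lemma norm_toEuclideanLin_eq_of_conjTranspose_mul_self_eq {X Y : Matrix m k 𝕜}
    (h : Xᴴ * X = Yᴴ * Y) (x : EuclideanSpace 𝕜 k) :
    ‖toEuclideanLin X x‖ = ‖toEuclideanLin Y x‖ := by
  classical
  have inner_self (Z : Matrix m k 𝕜) :
      inner 𝕜 (toEuclideanLin Z x) (toEuclideanLin Z x) =
        inner 𝕜 (toEuclideanLin (Zᴴ * Z) x) x := by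
    rw [← LinearMap.adjoint_inner_left, ← toEuclideanLin_conjTranspose_eq_adjoint]
    simp [toLpLin_apply]
  rw [@norm_eq_sqrt_re_inner 𝕜, @norm_eq_sqrt_re_inner 𝕜 _ _ _ _ (toEuclideanLin Y x),
    inner_self, inner_self, h]

lemma exists_mem_unitaryGroup_mul_eq_of_conjTranspose_mul_self_eq {m k : Type*} [Fintype m]
    [DecidableEq m] [Finite k] {X Y : Matrix m k 𝕜} (h : Xᴴ * X = Yᴴ * Y) :
    ∃ T ∈ unitaryGroup m 𝕜, T * X = Y := by
  classical
  cases nonempty_fintype k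
  obtain ⟨T, hT⟩ := exists_linearIsometryEquiv_apply_eq
    (norm_toEuclideanLin_eq_of_conjTranspose_mul_self_eq h)
  let b := EuclideanSpace.basisFun m 𝕜
  refine ⟨_, T.toMatrix_mem_unitaryGroup b b, ?_⟩
  refine ext_of_mulVec_single fun j ↦ ?_
  have hcol := LinearMap.toMatrix_mulVec_repr b.toBasis b.toBasis T.toLinearMap
    (toEuclideanLin X (EuclideanSpace.single j 1))
  rw [← mulVec_mulVec]
  refine hcol.trans ?_
  rw [LinearEquiv.coe_coe, LinearIsometryEquiv.coe_toLinearEquiv, hT]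
  ext i
  simp [b, toLpLin_apply]

end Isometry

/-- The adjoint `X⋆ = JᵀXᴴJ` of `X` with respect to the sesquilinear form with Gram matrix `J`.
Mathlib's `J` is the negative of `Jmat`; the sign cancels in `X⋆`. -/
def symplecticAdjoint {l R : Type*} [Fintype l] [DecidableEq l] [CommRing R] [StarRing R]
    (X : Matrix (l ⊕ l) (l ⊕ l) R) : Matrix (l ⊕ l) (l ⊕ l) R :=
  (J l R)ᵀ * Xᴴ * J l R

local postfix:max "⋆" => symplecticAdjoint

section SymplecticAdjoint

lemma J_mul_J_mul {l k R : Type*} [Fintype l] [DecidableEq l] [CommRing R]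
    (X : Matrix (l ⊕ l) k R) : J l R * (J l R * X) = -X := by
  rw [← Matrix.mul_assoc, J_squared, Matrix.neg_mul, Matrix.one_mul]

variable {l R : Type*} [DecidableEq l] [CommRing R] [StarRing R]

lemma J_conjTranspose : (J l R)ᴴ = -J l R := by
  simp [J, fromBlocks_conjTranspose, fromBlocks_neg]

variable [Fintype l]

lemma symplecticAdjoint_add (X Y : Matrix (l ⊕ l) (l ⊕ l) R) : (X + Y)⋆ = X⋆ + Y⋆ := by
  simp only [symplecticAdjoint, conjTranspose_add, Matrix.mul_add, Matrix.add_mul]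

lemma symplecticAdjoint_mul (X Y : Matrix (l ⊕ l) (l ⊕ l) R) : (X * Y)⋆ = Y⋆ * X⋆ := by
  have hJ : J l R * (J l R)ᵀ = 1 := by rw [J_transpose, Matrix.mul_neg, J_squared, neg_neg]
  simp only [symplecticAdjoint, conjTranspose_mul, Matrix.mul_assoc]
  rw [← Matrix.mul_assoc (J l R) (J l R)ᵀ, hJ, Matrix.one_mul]

lemma symplecticAdjoint_symplecticAdjoint (X : Matrix (l ⊕ l) (l ⊕ l) R) : X⋆⋆ = X := by
  simp only [symplecticAdjoint, conjTranspose_mul, conjTranspose_conjTranspose, J_transpose,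
    conjTranspose_neg, J_conjTranspose, Matrix.mul_assoc, Matrix.neg_mul, Matrix.mul_neg, neg_neg,
    J_squared, Matrix.mul_one]
  rw [J_mul_J_mul, neg_neg]

lemma symplecticAdjoint_mul_mul_conjTranspose (U : Matrix (l ⊕ l) l R) (C : Matrix l l R) :
    (U * C * Uᴴ)⋆ = J l R * U * Cᴴ * (J l R * U)ᴴ := by
  simp only [symplecticAdjoint, conjTranspose_mul, conjTranspose_conjTranspose, J_transpose,
    J_conjTranspose, Matrix.mul_neg, Matrix.neg_mul, Matrix.mul_assoc]

lemma mul_mul_conjTranspose_add_symplecticAdjoint (U : Matrix (l ⊕ l) l R) (C : Matrix l l R) :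
    U * C * Uᴴ + (U * C * Uᴴ)⋆ =
      fromCols U (J l R * U) * fromBlocks C 0 0 Cᴴ * (fromCols U (J l R * U))ᴴ := by
  rw [symplecticAdjoint_mul_mul_conjTranspose, fromCols_mul_fromBlocks,
    conjTranspose_fromCols_eq_fromRows_conjTranspose, fromCols_mul_fromRows]
  simp only [Matrix.mul_zero, add_zero, zero_add]

/-- The columns of `U` form an orthonormal basis of a Lagrangian subspace for the sesquilinear form
with Gram matrix `J`. -/
structure IsLagrangianFrame (U : Matrix (l ⊕ l) l R) : Prop where
  conjTranspose_mul_self : Uᴴ * U = 1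
  conjTranspose_mul_J_mul : Uᴴ * (J l R * U) = 0

namespace IsLagrangianFrame

variable {U : Matrix (l ⊕ l) l R}

lemma mul_mem_unitaryGroup (hU : IsLagrangianFrame U) {W : Matrix l l R}
    (hW : W ∈ unitaryGroup l R) : IsLagrangianFrame (U * W) where
  conjTranspose_mul_self := by
    rw [conjTranspose_mul, Matrix.mul_assoc, ← Matrix.mul_assoc Uᴴ, hU.conjTranspose_mul_self,
      Matrix.one_mul, ← star_eq_conjTranspose, mem_unitaryGroup_iff'.mp hW]
  conjTranspose_mul_J_mul := by
    rw [conjTranspose_mul, ← Matrix.mul_assoc (J l R), Matrix.mul_assoc, ← Matrix.mul_assoc Uᴴ,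
      hU.conjTranspose_mul_J_mul, Matrix.zero_mul, Matrix.mul_zero]

lemma conjTranspose_fromCols_mul_fromCols (hU : IsLagrangianFrame U) :
    (fromCols U (J l R * U))ᴴ * fromCols U (J l R * U) = 1 := by
  rw [conjTranspose_fromCols_eq_fromRows_conjTranspose, fromRows_mul_fromCols, conjTranspose_mul,
    J_conjTranspose]
  simp only [Matrix.mul_assoc, Matrix.neg_mul, Matrix.mul_neg, J_mul_J_mul,
    hU.conjTranspose_mul_self, hU.conjTranspose_mul_J_mul, neg_neg, neg_zero, fromBlocks_one]

lemma conjTranspose_fromCols_mul_J_mul_fromCols (hU : IsLagrangianFrame U) :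
    (fromCols U (J l R * U))ᴴ * J l R * fromCols U (J l R * U) = J l R := by
  rw [conjTranspose_fromCols_eq_fromRows_conjTranspose, Matrix.mul_assoc, mul_fromCols,
    fromRows_mul_fromCols, conjTranspose_mul, J_conjTranspose]
  simp only [Matrix.mul_assoc, Matrix.neg_mul, Matrix.mul_neg, J_mul_J_mul,
    hU.conjTranspose_mul_self, hU.conjTranspose_mul_J_mul, neg_neg, neg_zero]
  rfl

lemma mul_conjTranspose_add_symplecticAdjoint (hU : IsLagrangianFrame U) :
    U * Uᴴ + (U * Uᴴ)⋆ = 1 := by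
  have h := mul_mul_conjTranspose_add_symplecticAdjoint U 1
  rwa [conjTranspose_one, fromBlocks_one, Matrix.mul_one, Matrix.mul_one,
    mul_eq_one_comm.mp hU.conjTranspose_fromCols_mul_fromCols] at h

lemma mul_symplecticAdjoint_eq_zero (hU : IsLagrangianFrame U) (C : Matrix l l R) :
    U * C * Uᴴ * (U * C * Uᴴ)⋆ = 0 := by
  rw [symplecticAdjoint_mul_mul_conjTranspose]
  simp only [Matrix.mul_assoc]
  rw [← Matrix.mul_assoc (J l R), ← Matrix.mul_assoc Uᴴ (J l R * U), hU.conjTranspose_mul_J_mul,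
    Matrix.zero_mul, Matrix.mul_zero, Matrix.mul_zero]

lemma symplecticAdjoint_mul_eq_zero (hU : IsLagrangianFrame U) (C : Matrix l l R) :
    (U * C * Uᴴ)⋆ * (U * C * Uᴴ) = 0 := by
  have hU' : (J l R * U)ᴴ * U = 0 := by
    rw [conjTranspose_mul, J_conjTranspose, Matrix.mul_neg, Matrix.neg_mul, Matrix.mul_assoc,
      hU.conjTranspose_mul_J_mul, neg_zero]
  rw [symplecticAdjoint_mul_mul_conjTranspose, Matrix.mul_assoc, Matrix.mul_assoc U,
    ← Matrix.mul_assoc _ᴴ U, hU', Matrix.zero_mul, Matrix.mul_zero]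

end IsLagrangianFrame

end SymplecticAdjoint

section LagrangianGraph

open Complex (I)

variable {l k : Type*} [Fintype l] [DecidableEq l]

/-- The frame of the Lagrangian subspace that is the graph of the unitary matrix `T`, seen as a map
between the two eigenspaces `{(x, -ix)}` and `{(x, ix)}` of `J`. -/
noncomputable def lagrangianGraph (T : Matrix l l ℂ) : Matrix (l ⊕ l) l ℂ :=
  fromRows ((2⁻¹ : ℂ) • (1 + T)) ((2⁻¹ * I) • (T - 1))

lemma J_mul_fromRows (P Q : Matrix l k ℂ) : J l ℂ * fromRows P Q = fromRows (-Q) P := by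
  simp [J, fromBlocks_mul_fromRows]

lemma isLagrangianFrame_lagrangianGraph {T : Matrix l l ℂ} (hT : T ∈ unitaryGroup l ℂ) :
    IsLagrangianFrame (lagrangianGraph T) := by
  have hTT : Tᴴ * T = 1 := mem_unitaryGroup_iff'.mp hT
  constructor
  all_goals
    simp only [lagrangianGraph, J_mul_fromRows, conjTranspose_fromRows_eq_fromCols_conjTranspose,
      fromCols_mul_fromRows, conjTranspose_add, conjTranspose_sub, conjTranspose_smul,
      Matrix.add_mul, Matrix.mul_add, Matrix.sub_mul, Matrix.mul_sub, Matrix.smul_mul,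
      Matrix.mul_smul, Matrix.mul_neg, hTT, conjTranspose_one, Matrix.one_mul, Matrix.mul_one,
      star_mul', star_inv₀, star_ofNat, Complex.star_def, Complex.conj_I]
  · match_scalars <;> ring_nf <;> simp
    norm_num
  · module

lemma lagrangianGraph_mul {T : Matrix l l ℂ} {P Q : Matrix l k ℂ}
    (h : T * (P + I • Q) = P - I • Q) :
    lagrangianGraph T * (P + I • Q : Matrix l k ℂ) = fromRows P Q := by
  simp only [lagrangianGraph, fromRows_mul, Matrix.smul_mul, Matrix.add_mul, Matrix.sub_mul,
    Matrix.one_mul, h]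
  congr 1
  · module
  · match_scalars <;> ring_nf
    simp

lemma exists_isLagrangianFrame_of_isotropic [Finite k] {X : Matrix (l ⊕ l) k ℂ}
    (hX : Xᴴ * (J l ℂ * X) = 0) :
    ∃ U : Matrix (l ⊕ l) l ℂ, IsLagrangianFrame U ∧ U * (Uᴴ * X) = X := by
  obtain ⟨P, Q, rfl⟩ : ∃ P Q, X = fromRows P Q := ⟨_, _, (fromRows_toRows X).symm⟩
  have hPQ : Pᴴ * Q = Qᴴ * P := by
    rw [J_mul_fromRows, conjTranspose_fromRows_eq_fromCols_conjTranspose,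
      fromCols_mul_fromRows, Matrix.mul_neg, neg_add_eq_zero] at hX
    exact hX
  have hgram : (P + I • Q)ᴴ * (P + I • Q) = (P - I • Q)ᴴ * (P - I • Q) := by
    simp only [conjTranspose_add, conjTranspose_sub, conjTranspose_smul, Matrix.add_mul,
      Matrix.mul_add, Matrix.sub_mul, Matrix.mul_sub, Matrix.smul_mul, Matrix.mul_smul, hPQ,
      Complex.star_def, Complex.conj_I]
    module
  obtain ⟨T, hT, hTPQ⟩ := exists_mem_unitaryGroup_mul_eq_of_conjTranspose_mul_self_eq hgram
  have hU := isLagrangianFrame_lagrangianGraph hT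
  refine ⟨lagrangianGraph T, hU, ?_⟩
  rw [← lagrangianGraph_mul hTPQ, ← Matrix.mul_assoc _ᴴ, hU.conjTranspose_mul_self, Matrix.one_mul]

end LagrangianGraph

section SymplecticDiagonalization

variable {l R : Type*} [Fintype l] [DecidableEq l] [CommRing R] [StarRing R]

/-- `A` becomes diagonal under a similarity by a matrix `S` that preserves the sesquilinear form
with Gram matrix `J`; such an `S` is invertible, so `S⁻¹` is not a junk value. -/
def IsSymplecticallyDiagonalizable (A : Matrix (l ⊕ l) (l ⊕ l) R) : Prop :=
  ∃ S : Matrix (l ⊕ l) (l ⊕ l) R, Sᴴ * J l R * S = J l R ∧ (S⁻¹ * A * S).IsDiag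

lemma isUnit_of_conjTranspose_mul_J_mul_eq {S : Matrix (l ⊕ l) (l ⊕ l) R}
    (hS : Sᴴ * J l R * S = J l R) : IsUnit S := by
  refine .of_mul_eq_one_right (-(J l R * Sᴴ * J l R)) ?_
  rw [Matrix.neg_mul, Matrix.mul_assoc (J l R), Matrix.mul_assoc, hS, J_squared, neg_neg]

lemma exists_isLagrangianFrame_of_mul_eq_mul {A : Matrix (l ⊕ l) (l ⊕ l) ℂ} {V : Matrix (l ⊕ l) l ℂ}
    (hV : Function.Injective V.mulVec) (hVJ : Vᴴ * (J l ℂ * V) = 0) {C : Matrix l l ℂ}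
    (h : A * V = V * C) :
    ∃ (U : Matrix (l ⊕ l) l ℂ) (C' : Matrix l l ℂ), IsLagrangianFrame U ∧ A * U = U * C' := by
  obtain ⟨G, hG, hVG⟩ := exists_isUnit_conjTranspose_mul_self_eq_one hV
  refine ⟨V * G, G⁻¹ * C * G, ⟨hVG, ?_⟩, ?_⟩
  · rw [conjTranspose_mul, ← Matrix.mul_assoc (J l ℂ), Matrix.mul_assoc, ← Matrix.mul_assoc Vᴴ,
      hVJ, Matrix.zero_mul, Matrix.mul_zero]
  · rw [← Matrix.mul_assoc, h, Matrix.mul_assoc G⁻¹, Matrix.mul_assoc V G,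
      mul_nonsing_inv_cancel_left _ _ ((isUnit_iff_isUnit_det G).mp hG), Matrix.mul_assoc]

lemma IsSymplecticallyDiagonalizable.exists_isLagrangianFrame_mul_eq_mul
    {A : Matrix (l ⊕ l) (l ⊕ l) ℂ} (hA : IsSymplecticallyDiagonalizable A) :
    ∃ (U : Matrix (l ⊕ l) l ℂ) (C : Matrix l l ℂ), IsLagrangianFrame U ∧ A * U = U * C := by
  obtain ⟨S, hS, hD⟩ := hA
  have hSu := isUnit_of_conjTranspose_mul_J_mul_eq hS
  obtain ⟨V, V', rfl⟩ : ∃ V V' : Matrix (l ⊕ l) l ℂ, S = fromCols V V' :=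
    ⟨_, _, (fromCols_toCols S).symm⟩
  have hAS : A * fromCols V V' = fromCols V V' * ((fromCols V V')⁻¹ * A * fromCols V V') := by
    rw [Matrix.mul_assoc _⁻¹,
      mul_nonsing_inv_cancel_left _ _ ((isUnit_iff_isUnit_det _).mp hSu)]
  generalize (fromCols V V')⁻¹ * A * fromCols V V' = D at hD hAS
  have hAV : A * V = V * D.toBlocks₁₁ := by
    have hD₂₁ : D.toBlocks₂₁ = 0 := by ext i j; exact hD Sum.inr_ne_inl
    rw [← fromBlocks_toBlocks D, hD₂₁, mul_fromCols, fromCols_mul_fromBlocks, Matrix.mul_zero,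
      add_zero] at hAS
    exact (fromCols_inj hAS).1
  have hVJ : Vᴴ * (J l ℂ * V) = 0 := by
    rw [conjTranspose_fromCols_eq_fromRows_conjTranspose, Matrix.mul_assoc, mul_fromCols,
      fromRows_mul_fromCols, J, fromBlocks_inj] at hS
    exact hS.1
  have hV : Function.Injective V.mulVec := fun x y hxy ↦ by
    have hxy' : Sum.elim x (0 : l → ℂ) = Sum.elim y 0 :=
      mulVec_injective_of_isUnit hSu (by simpa [fromCols_mulVec_sumElim] using hxy)
    exact (Sum.elim_eq_iff.mp hxy').1
  exact exists_isLagrangianFrame_of_mul_eq_mul hV hVJ hAV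

lemma isStarNormal_fromBlocks_conjTranspose {m : Type*} [Fintype m] {C : Matrix m m R}
    (hC : IsStarNormal C) : IsStarNormal (fromBlocks C 0 0 Cᴴ) := by
  rw [isStarNormal_iff, commute_iff_eq, star_eq_conjTranspose] at hC ⊢
  simp [fromBlocks_conjTranspose, fromBlocks_multiply, hC]

namespace IsLagrangianFrame

lemma isStarNormal_add_symplecticAdjoint {U : Matrix (l ⊕ l) l R} (hU : IsLagrangianFrame U)
    {C : Matrix l l R} (hC : IsStarNormal C) : IsStarNormal (U * C * Uᴴ + (U * C * Uᴴ)⋆) := by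
  rw [mul_mul_conjTranspose_add_symplecticAdjoint]
  exact isStarNormal_mul_mul_conjTranspose hU.conjTranspose_fromCols_mul_fromCols
    (isStarNormal_fromBlocks_conjTranspose hC)

lemma isSymplecticallyDiagonalizable_add_symplecticAdjoint {U : Matrix (l ⊕ l) l ℂ}
    (hU : IsLagrangianFrame U) {C : Matrix l l ℂ} (hC : IsStarNormal C) :
    IsSymplecticallyDiagonalizable (U * C * Uᴴ + (U * C * Uᴴ)⋆) := by
  obtain ⟨W, hW, d, rfl⟩ := exists_unitary_diagonalization_of_isStarNormal hC
  have hUW := hU.mul_mem_unitaryGroup hW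
  have hS := hUW.conjTranspose_fromCols_mul_fromCols
  have hUWd : U * (W * diagonal d * Wᴴ) * Uᴴ = U * W * diagonal d * (U * W)ᴴ := by
    simp only [conjTranspose_mul, Matrix.mul_assoc]
  refine ⟨_, hUW.conjTranspose_fromCols_mul_J_mul_fromCols, ?_⟩
  rw [hUWd, mul_mul_conjTranspose_add_symplecticAdjoint, inv_eq_left_inv hS, Matrix.mul_assoc,
    Matrix.mul_assoc _ _ᴴ, hS, Matrix.mul_one, ← Matrix.mul_assoc, hS, Matrix.one_mul,
    diagonal_conjTranspose, fromBlocks_diagonal]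
  exact isDiag_diagonal _

lemma eq_add_symplecticAdjoint [PartialOrder R] [StarOrderedRing R] [NoZeroDivisors R]
    {U : Matrix (l ⊕ l) l R} (hU : IsLagrangianFrame U) {A : Matrix (l ⊕ l) (l ⊕ l) R}
    (hA : IsStarNormal A) (hA' : A⋆ = A) {C : Matrix l l R} (h : A * U = U * C) :
    A = U * C * Uᴴ + (U * C * Uᴴ)⋆ := by
  have hUA : Uᴴ * A = C * Uᴴ := by
    simpa using congrArg conjTranspose
      (conjTranspose_mul_eq_of_mul_eq hA hU.conjTranspose_mul_self h)
  calc A = A * (U * Uᴴ + (U * Uᴴ)⋆) := by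
        rw [hU.mul_conjTranspose_add_symplecticAdjoint, Matrix.mul_one]
    _ = A * U * Uᴴ + (U * (Uᴴ * A))⋆ := by
        rw [Matrix.mul_add, ← Matrix.mul_assoc, ← Matrix.mul_assoc U, symplecticAdjoint_mul _ A,
          hA']
    _ = U * C * Uᴴ + (U * C * Uᴴ)⋆ := by rw [h, hUA, Matrix.mul_assoc U]

end IsLagrangianFrame

lemma conjTranspose_mul_J_mul_self_eq_zero [PartialOrder R] [StarOrderedRing R] [NoZeroDivisors R]
    {N : Matrix (l ⊕ l) (l ⊕ l) R} (hN : IsStarNormal N) (h : N * N⋆ = 0) :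
    Nᴴ * (J l R * N) = 0 := by
  have hNJN' : N * (J l R * Nᴴ) = 0 := by
    have hNJ := congrArg (· * J l R) h
    simpa [symplecticAdjoint, J_transpose, Matrix.mul_assoc, J_squared] using hNJ
  have hN'JN' : Nᴴ * (J l R * Nᴴ) = 0 := conjTranspose_mul_eq_zero_of_mul_eq_zero hN hNJN'
  have hNJN : N * (J l R * N) = 0 := by
    simpa [J_conjTranspose, Matrix.mul_assoc] using congrArg conjTranspose hN'JN'
  exact conjTranspose_mul_eq_zero_of_mul_eq_zero hN hNJN

open scoped ComplexOrder in
lemma exists_isLagrangianFrame_eq_mul_mul_conjTranspose {N : Matrix (l ⊕ l) (l ⊕ l) ℂ}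
    (hN : IsStarNormal N) (h : N * N⋆ = 0) :
    ∃ (U : Matrix (l ⊕ l) l ℂ) (C : Matrix l l ℂ),
      IsLagrangianFrame U ∧ IsStarNormal C ∧ N = U * C * Uᴴ := by
  obtain ⟨U, hU, hUN⟩ :=
    exists_isLagrangianFrame_of_isotropic (conjTranspose_mul_J_mul_self_eq_zero hN h)
  have hNU : N * U = U * (Uᴴ * (N * U)) := by
    conv_lhs => rw [← hUN]
    simp only [Matrix.mul_assoc]
  have hN'U := conjTranspose_mul_eq_of_mul_eq hN hU.conjTranspose_mul_self hNU
  have hUN' : Uᴴ * N = Uᴴ * (N * U) * Uᴴ := by simpa using congrArg conjTranspose hN'U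
  refine ⟨U, _, hU, isStarNormal_of_mul_eq hN hU.conjTranspose_mul_self hNU, ?_⟩
  rw [Matrix.mul_assoc, ← hUN', hUN]

end SymplecticDiagonalization

open scoped ComplexOrder in
theorem stmt17_general {l : Type*} [Fintype l] [DecidableEq l] (A : Matrix (l ⊕ l) (l ⊕ l) ℂ) :
    IsStarNormal A ∧ A⋆ = A ∧ IsSymplecticallyDiagonalizable A ↔
      ∃ N, IsStarNormal N ∧ N * N⋆ = 0 ∧ N⋆ * N = 0 ∧ A = N + N⋆ := by
  constructor
  · rintro ⟨hA, hA', hS⟩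
    obtain ⟨U, C, hU, hAU⟩ := hS.exists_isLagrangianFrame_mul_eq_mul
    have hC := isStarNormal_of_mul_eq hA hU.conjTranspose_mul_self hAU
    exact ⟨U * C * Uᴴ, isStarNormal_mul_mul_conjTranspose hU.conjTranspose_mul_self hC,
      hU.mul_symplecticAdjoint_eq_zero C, hU.symplecticAdjoint_mul_eq_zero C,
      hU.eq_add_symplecticAdjoint hA hA' hAU⟩
  · rintro ⟨N, hN, hNN, -, rfl⟩
    obtain ⟨U, C, hU, hC, rfl⟩ := exists_isLagrangianFrame_eq_mul_mul_conjTranspose hN hNN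
    exact ⟨hU.isStarNormal_add_symplecticAdjoint hC,
      by rw [symplecticAdjoint_add, symplecticAdjoint_symplecticAdjoint, add_comm],
      hU.isSymplecticallyDiagonalizable_add_symplecticAdjoint hC⟩

lemma Jmat_eq_neg_J (n : ℕ) : Jmat n = -J (Fin n) ℂ := by
  simp [Jmat, J, fromBlocks_neg]

theorem stmt17 (n : ℕ) (A : Matrix (Fin n ⊕ Fin n) (Fin n ⊕ Fin n) ℂ) :
    (Aᴴ * A = A * Aᴴ ∧ (Jmat n)ᵀ * Aᴴ * Jmat n = A ∧
      ∃ S : Matrix (Fin n ⊕ Fin n) (Fin n ⊕ Fin n) ℂ,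
        Sᴴ * Jmat n * S = Jmat n ∧ (S⁻¹ * A * S).IsDiag) ↔
    ∃ N : Matrix (Fin n ⊕ Fin n) (Fin n ⊕ Fin n) ℂ,
      Nᴴ * N = N * Nᴴ ∧
      N * ((Jmat n)ᵀ * Nᴴ * Jmat n) = 0 ∧
      ((Jmat n)ᵀ * Nᴴ * Jmat n) * N = 0 ∧
      A = N + (Jmat n)ᵀ * Nᴴ * Jmat n := by
  simpa [Jmat_eq_neg_J, isStarNormal_iff, commute_iff_eq, star_eq_conjTranspose, symplecticAdjoint,
    IsSymplecticallyDiagonalizable] using stmt17_general A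
end

section
/- Let N ∈ M_{2n}(ℂ) be normal with NN⋆ = N⋆N = 0, where N⋆ = JᵀNᴴJ and J = J_{2n}, and set A = N − N⋆. Then: (a) rank(N) ≤ n; (b) im(N) and im(N⋆) are neutral subspaces for the form xᴴJy and are invariant under A; (c) if λ ≠ 0 is an eigenvalue of N with eigenvector v, then Av = λv, so σ(N) \ {0} ⊆ σ(A). -/
open Matrix

/-!
Everything is governed by the adjoint relation `NᴴJ = JN⋆`. It turns `N⋆N = 0` into `NᴴJN = 0`, so
`im N` is neutral, and `NN⋆ = 0` into `N⋆ᴴJN⋆ = (NN⋆)ᴴJ = 0`, so `im N⋆` is neutral. A neutral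
subspace has at most half the dimension of the ambient space when `J` is invertible, which bounds
the rank. Since `N` and `N⋆` commute, both commute with `A`, so their images are `A`-invariant; and
`N⋆N = 0` means that `N⋆` vanishes on `im N`, which contains every eigenvector of `N` for a nonzero
eigenvalue.
-/

section Neutral

theorem star_mulVec_dotProduct_mulVec_mulVec {k l m n R : Type*} [Fintype k] [Fintype l]
    [Fintype m] [Fintype n] [NonUnitalSemiring R] [StarRing R] (A : Matrix k m R)
    (J : Matrix k l R) (B : Matrix l n R) (x : m → R) (y : n → R) :
    star (A *ᵥ x) ⬝ᵥ J *ᵥ (B *ᵥ y) = star x ⬝ᵥ (Aᴴ * J * B) *ᵥ y := by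
  rw [star_mulVec, ← dotProduct_mulVec, mulVec_mulVec, mulVec_mulVec]

variable {m n R : Type*} [Fintype m] [Fintype n] [CommSemiring R] [StarRing R]

/-- The submodule `S` is neutral (totally isotropic) for the sesquilinear form `[x, y] = xᴴJy`. -/
def IsNeutral (J : Matrix m m R) (S : Submodule R (m → R)) : Prop :=
  ∀ x ∈ S, ∀ y ∈ S, star x ⬝ᵥ J *ᵥ y = 0

/-- `M` is an adjoint of `N` for the form `[x, y] = xᴴJy`, that is `[N x, y] = [x, M y]`. A
relation is used so that `J` need not be inverted; for invertible `J` the only adjoint is `J⁻¹NᴴJ`,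
which is `N⋆` when `J⁻¹ = Jᵀ`. -/
def IsFormAdjoint (J N M : Matrix m m R) : Prop :=
  Nᴴ * J = J * M

theorem isNeutral_range_toLin'_iff [DecidableEq n] {J : Matrix m m R} {A : Matrix m n R} :
    IsNeutral J (LinearMap.range A.toLin') ↔ Aᴴ * J * A = 0 := by
  simp only [IsNeutral, LinearMap.mem_range, forall_exists_index, forall_apply_eq_imp_iff,
    toLin'_apply, star_mulVec_dotProduct_mulVec_mulVec]
  refine ⟨fun h ↦ ?_, fun h x y ↦ by rw [h, zero_mulVec, dotProduct_zero]⟩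
  ext i j
  simpa [Pi.star_single] using h (Pi.single i 1) (Pi.single j 1)

namespace IsFormAdjoint

variable [DecidableEq m] {J N M : Matrix m m R}

theorem isNeutral_range_of_adjoint_mul_eq_zero (h : IsFormAdjoint J N M) (hMN : M * N = 0) :
    IsNeutral J (LinearMap.range N.toLin') :=
  isNeutral_range_toLin'_iff.2 <| calc
    Nᴴ * J * N = J * (M * N) := by rw [h, Matrix.mul_assoc]
    _ = 0 := by rw [hMN, Matrix.mul_zero]

theorem isNeutral_range_adjoint_of_mul_adjoint_eq_zero (h : IsFormAdjoint J N M)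
    (hNM : N * M = 0) : IsNeutral J (LinearMap.range M.toLin') :=
  isNeutral_range_toLin'_iff.2 <| calc
    Mᴴ * J * M = Mᴴ * (Nᴴ * J) := by rw [h, Matrix.mul_assoc]
    _ = (N * M)ᴴ * J := by rw [conjTranspose_mul, Matrix.mul_assoc]
    _ = 0 := by rw [hNM, conjTranspose_zero, Matrix.zero_mul]

end IsFormAdjoint

end Neutral

theorem finrank_eq_of_semilinearEquiv {R S V W : Type*} [Semiring R] [Semiring S]
    [AddCommMonoid V] [AddCommMonoid W] [Module R V] [Module S W] {σ : R →+* S} {σ' : S →+* R}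
    [RingHomInvPair σ σ'] [RingHomInvPair σ' σ] (e : V ≃ₛₗ[σ] W) :
    Module.finrank R V = Module.finrank S W := by
  have hσ : Function.Bijective σ := (RingHomInvPair.toRingEquiv σ σ').bijective
  simpa [Module.finrank] using
    congrArg Cardinal.toNat (lift_rank_eq_of_equiv_equiv σ e.toAddEquiv hσ e.map_smulₛₗ)

theorem range_vecMulLinear_conjTranspose {m n R : Type*} [Fintype n] [CommSemiring R] [StarRing R]
    (A : Matrix m n R) :
    LinearMap.range Aᴴ.vecMulLinear =
      (LinearMap.range A.mulVecLin).map (starLinearEquiv R (A := m → R)).toLinearMap := by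
  ext y
  constructor
  · rintro ⟨x, rfl⟩
    exact ⟨A *ᵥ star x, ⟨star x, rfl⟩, by simp [star_mulVec]⟩
  · rintro ⟨_, ⟨x, rfl⟩, rfl⟩
    exact ⟨star x, (star_mulVec A x).symm⟩

-- `Matrix.rank_conjTranspose` covers only star-ordered fields.
theorem rank_conjTranspose_of_field {m n K : Type*} [Fintype m] [Fintype n] [Field K] [StarRing K]
    (A : Matrix m n K) : Aᴴ.rank = A.rank := by
  rw [← rank_transpose, rank, mulVecLin_transpose, range_vecMulLinear_conjTranspose]
  exact (finrank_eq_of_semilinearEquiv ((starLinearEquiv K).submoduleMap _)).symm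

theorem exists_range_toLin'_eq {m K : Type*} [Fintype m] [DecidableEq m] [Field K]
    (S : Submodule K (m → K)) : ∃ A : Matrix m m K, LinearMap.range A.toLin' = S := by
  obtain ⟨p, hp⟩ := S.subtype.exists_leftInverse_of_injective S.ker_subtype
  have hp_range : LinearMap.range p = ⊤ :=
    LinearMap.range_eq_top.2 fun x ↦ ⟨x, LinearMap.congr_fun hp x⟩
  refine ⟨LinearMap.toMatrix' (S.subtype ∘ₗ p), ?_⟩
  rw [toLin'_toMatrix', LinearMap.range_comp, hp_range, Submodule.map_top, Submodule.range_subtype]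

theorem IsNeutral.two_mul_finrank_le_card {m K : Type*} [Fintype m] [DecidableEq m] [Field K]
    [StarRing K] {J : Matrix m m K} {S : Submodule K (m → K)} (hS : IsNeutral J S)
    (hJ : IsUnit J) : 2 * Module.finrank K S ≤ Fintype.card m := by
  obtain ⟨A, rfl⟩ := exists_range_toLin'_eq S
  have hAJA : Aᴴ * J * A = 0 := isNeutral_range_toLin'_iff.1 hS
  have hdet : IsUnit J.det := (isUnit_iff_isUnit_det J).1 hJ
  calc
    2 * A.rank = (Aᴴ * J).rank + A.rank := by
      rw [rank_mul_eq_left_of_isUnit_det J _ hdet, rank_conjTranspose_of_field, two_mul]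
    _ ≤ Fintype.card m := rank_add_rank_le_card_of_mul_eq_zero hAJA

theorem range_mem_invtSubmodule_of_commute {R V : Type*} [Semiring R] [AddCommMonoid V] [Module R V]
    {f g : Module.End R V} (h : Commute f g) :
    LinearMap.range g ∈ Module.End.invtSubmodule f := by
  rintro _ ⟨x, rfl⟩
  exact ⟨f x, (LinearMap.congr_fun h x).symm⟩

theorem eigenspace_le_eigenspace_sub_of_mul_eq_zero {R V : Type*} [CommRing R] [IsDomain R]
    [AddCommGroup V] [Module R V] [Module.IsTorsionFree R V] {f g : Module.End R V}
    (h : g * f = 0) {μ : R} (hμ : μ ≠ 0) : f.eigenspace μ ≤ (f - g).eigenspace μ := by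
  intro v hv
  rw [Module.End.mem_eigenspace_iff] at hv ⊢
  have hgv : μ • g v = 0 := by
    rw [← map_smul, ← hv, ← Module.End.mul_apply, h, LinearMap.zero_apply]
  rw [LinearMap.sub_apply, (smul_eq_zero.1 hgv).resolve_left hμ, sub_zero, hv]

theorem stmt18_general {m K : Type*} [Fintype m] [DecidableEq m] [Field K] [StarRing K]
    {J N M : Matrix m m K} (hJ : IsUnit J) (hadj : IsFormAdjoint J N M)
    (hNM : N * M = 0) (hMN : M * N = 0) :
    2 * N.rank ≤ Fintype.card m ∧
    IsNeutral J (LinearMap.range N.toLin') ∧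
    IsNeutral J (LinearMap.range M.toLin') ∧
    LinearMap.range N.toLin' ∈ Module.End.invtSubmodule (N - M).toLin' ∧
    LinearMap.range M.toLin' ∈ Module.End.invtSubmodule (N - M).toLin' ∧
    ∀ μ : K, μ ≠ 0 →
      Module.End.eigenspace N.toLin' μ ≤ Module.End.eigenspace (N - M).toLin' μ := by
  have hNM' : N.toLin' * M.toLin' = 0 := by rw [Module.End.mul_eq_comp, ← toLin'_mul, hNM, map_zero]
  have hMN' : M.toLin' * N.toLin' = 0 := by rw [Module.End.mul_eq_comp, ← toLin'_mul, hMN, map_zero]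
  have hcomm : Commute N.toLin' M.toLin' := hNM'.trans hMN'.symm
  have hneutral := hadj.isNeutral_range_of_adjoint_mul_eq_zero hMN
  rw [map_sub]
  exact ⟨hneutral.two_mul_finrank_le_card hJ, hneutral,
    hadj.isNeutral_range_adjoint_of_mul_adjoint_eq_zero hNM,
    range_mem_invtSubmodule_of_commute ((Commute.refl _).sub_left hcomm.symm),
    range_mem_invtSubmodule_of_commute (hcomm.sub_left (Commute.refl _)),
    fun _ hμ ↦ eigenspace_le_eigenspace_sub_of_mul_eq_zero hMN' hμ⟩

theorem Jmat_mul_transpose (n : ℕ) : Jmat n * (Jmat n)ᵀ = 1 := by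
  simp [Jmat, fromBlocks_transpose, fromBlocks_multiply]

theorem isFormAdjoint_Jmat {n : ℕ} (N : Matrix (Fin n ⊕ Fin n) (Fin n ⊕ Fin n) ℂ) :
    IsFormAdjoint (Jmat n) N ((Jmat n)ᵀ * Nᴴ * Jmat n) := by
  rw [IsFormAdjoint, ← Matrix.mul_assoc, ← Matrix.mul_assoc, Jmat_mul_transpose, Matrix.one_mul]

theorem stmt18 (n : ℕ) (N : Matrix (Fin n ⊕ Fin n) (Fin n ⊕ Fin n) ℂ)
    (hnorm : Nᴴ * N = N * Nᴴ)
    (h1 : N * ((Jmat n)ᵀ * Nᴴ * Jmat n) = 0)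
    (h2 : ((Jmat n)ᵀ * Nᴴ * Jmat n) * N = 0) :
    N.rank ≤ n ∧
    (∀ x y : Fin n ⊕ Fin n → ℂ,
      star (N.mulVec x) ⬝ᵥ (Jmat n).mulVec (N.mulVec y) = 0) ∧
    (∀ x y : Fin n ⊕ Fin n → ℂ,
      star (((Jmat n)ᵀ * Nᴴ * Jmat n).mulVec x) ⬝ᵥ
        (Jmat n).mulVec (((Jmat n)ᵀ * Nᴴ * Jmat n).mulVec y) = 0) ∧
    (∀ x : Fin n ⊕ Fin n → ℂ, ∃ z : Fin n ⊕ Fin n → ℂ,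
      (N - (Jmat n)ᵀ * Nᴴ * Jmat n).mulVec (N.mulVec x) = N.mulVec z) ∧
    (∀ x : Fin n ⊕ Fin n → ℂ, ∃ z : Fin n ⊕ Fin n → ℂ,
      (N - (Jmat n)ᵀ * Nᴴ * Jmat n).mulVec (((Jmat n)ᵀ * Nᴴ * Jmat n).mulVec x)
        = ((Jmat n)ᵀ * Nᴴ * Jmat n).mulVec z) ∧
    (∀ (lam : ℂ) (v : Fin n ⊕ Fin n → ℂ), v ≠ 0 → lam ≠ 0 →
      N.mulVec v = lam • v →
      (N - (Jmat n)ᵀ * Nᴴ * Jmat n).mulVec v = lam • v) := by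
  obtain ⟨hrank, hN, hM, hAN, hAM, heig⟩ := stmt18_general
    (IsUnit.of_mul_eq_one _ (Jmat_mul_transpose n)) (isFormAdjoint_Jmat N) h1 h2
  exact ⟨by simpa [← two_mul] using hrank,
    fun x y ↦ hN _ ⟨x, rfl⟩ _ ⟨y, rfl⟩,
    fun x y ↦ hM _ ⟨x, rfl⟩ _ ⟨y, rfl⟩,
    fun x ↦ (hAN ⟨x, rfl⟩).imp fun _ ↦ Eq.symm,
    fun x ↦ (hAM ⟨x, rfl⟩).imp fun _ ↦ Eq.symm,
    fun lam v _ hlam hv ↦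
      Module.End.mem_eigenspace_iff.1 (heig lam hlam (Module.End.mem_eigenspace_iff.2 hv))⟩
end
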